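/- In the precision-test setup, if α₂ < 0, α₂′ = α₃ > 0 and ε > 0, then for every x > 0 the local powers satisfy Π₂(x) = Π₃(x) < Π₁(x) < Π₄(x); if instead ε < 0, then Π₂(x) = Π₃(x) > Π₁(x) > Π₄(x). -/

import Mathlib

/-!
When `α₂' = α₃`, the Wald and score coefficients coincide, and with
`D = 3 / (-α₂) * (G₃ - G₅) + ε² * (G₅ - G₇)` (all distribution functions at `λ = -α₂ ε²` and `x`)
one has `Π₁ - Π₂ = (α₃ ε / 6) * D` and `Π₄ - Π₁ = (α₃ ε / 12) * D`. The ordering therefore follows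
from the fact that `G_{m,λ}(x)` strictly decreases when `m` increases by two
(`ncChisqCDF_add_two_lt`).

For the central distribution this is the identity `f_{m+2}' = (f_m - f_{m+2}) / 2`, which integrates
to `F_m(x) - F_{m+2}(x) = 2 f_{m+2}(x) > 0`. The noncentral distribution function is the
Poisson mixture of the central ones; integrating the series term by term is allowed because
the terms are nonnegative and their integrals, being bounded by the Poisson weights times `F_m(x)`,
are summable. Only `m ≥ 3` is needed, where the densities are continuous on `[0, ∞)`.
-/

/-- The chi-square density with `m` degrees of freedom:
`f_m(x) = x^(m/2-1) e^(-x/2) / (2^(m/2) Γ(m/2))` for `x > 0`, and `0` otherwise. -/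
noncomputable def chisqPDF (m : ℕ) (x : ℝ) : ℝ :=
  if 0 < x then
    x ^ ((m : ℝ) / 2 - 1) * Real.exp (-x / 2) /
      (2 ^ ((m : ℝ) / 2) * Real.Gamma ((m : ℝ) / 2))
  else 0

/-- The noncentral chi-square density with `m` degrees of freedom and
noncentrality parameter `lam`:
`g_{m,λ}(x) = Σ_{j=0}^∞ [e^{-λ/2} (λ/2)^j / j!] f_{m+2j}(x)`. -/
noncomputable def ncChisqPDF (m : ℕ) (lam x : ℝ) : ℝ :=
  ∑' j : ℕ, Real.exp (-lam / 2) * (lam / 2) ^ j / (Nat.factorial j : ℝ) *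
    chisqPDF (m + 2 * j) x

/-- The noncentral chi-square distribution function
`G_{m,λ}(x) = ∫_0^x g_{m,λ}(u) du`. -/
noncomputable def ncChisqCDF (m : ℕ) (lam x : ℝ) : ℝ :=
  ∫ u in (0 : ℝ)..x, ncChisqPDF m lam u

/-- The order-`n^{-1/2}` local power `1 - G_{1,λ}(x) - Σ_{k=0}^3 b_k G_{1+2k,λ}(x)`
of a test whose expansion coefficients are `b₀ = -(b₁+b₂+b₃), b₁, b₂, b₃`. -/
noncomputable def localPower (b1 b2 b3 lam x : ℝ) : ℝ :=
  1 - ncChisqCDF 1 lam x -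
    (-(b1 + b2 + b3) * ncChisqCDF 1 lam x + b1 * ncChisqCDF 3 lam x +
      b2 * ncChisqCDF 5 lam x + b3 * ncChisqCDF 7 lam x)

/-- Local power `Π₁` of the likelihood ratio test of `H₀ : φ = φ₀` in a
dispersion model, with `λ = -α₂ ε²`. -/
noncomputable def PiLR (α₂ α₂' α₃ ε φ : ℝ) (p : ℕ) (x : ℝ) : ℝ :=
  localPower ((α₂' - α₃) * ε ^ 3 / 2 + p * ε / (2 * φ))
    ((2 * α₃ - 3 * α₂') * ε ^ 3 / 6) 0 (-α₂ * ε ^ 2) x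

/-- Local power `Π₂` of the Wald test of `H₀ : φ = φ₀` in a dispersion model. -/
noncomputable def PiWald (α₂ α₂' α₃ ε φ : ℝ) (p : ℕ) (x : ℝ) : ℝ :=
  localPower ((α₂' - α₃) * ε ^ 3 / 2 - α₃ * ε / (2 * α₂) + p * ε / (2 * φ))
    (-((α₂' - α₃) * ε ^ 3) / 2 + α₃ * ε / (2 * α₂)) (-(α₃ * ε ^ 3) / 6)
    (-α₂ * ε ^ 2) x

/-- Local power `Π₃` of the score test of `H₀ : φ = φ₀` in a dispersion model. -/
noncomputable def PiScore (α₂ α₂' α₃ ε φ : ℝ) (p : ℕ) (x : ℝ) : ℝ :=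
  localPower ((α₂' - α₃) * ε ^ 3 / 2 + (2 * α₃ - 3 * α₂') * ε / (2 * α₂) + p * ε / (2 * φ))
    (-((2 * α₃ - 3 * α₂') * ε) / (2 * α₂)) ((2 * α₃ - 3 * α₂') * ε ^ 3 / 6)
    (-α₂ * ε ^ 2) x

/-- Local power `Π₄` of the gradient test of `H₀ : φ = φ₀` in a dispersion model. -/
noncomputable def PiGrad (α₂ α₂' α₃ ε φ : ℝ) (p : ℕ) (x : ℝ) : ℝ :=
  localPower ((α₂' - α₃) * ε ^ 3 / 2 + α₃ * ε / (4 * α₂) + p * ε / (2 * φ))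
    (-((2 * α₂' - α₃) * ε ^ 3) / 4 - α₃ * ε / (4 * α₂)) (α₃ * ε ^ 3 / 12)
    (-α₂ * ε ^ 2) x

open MeasureTheory

/-- For `m ≥ 3` the exponent `m / 2 - 1` is positive, so the closed formula also vanishes at `0`
and the case distinction in the density disappears on `[0, ∞)`. -/
lemma chisqPDF_eqOn {m : ℕ} (hm : 3 ≤ m) :
    Set.EqOn (chisqPDF m) (fun u => u ^ ((m : ℝ) / 2 - 1) * Real.exp (-u / 2) /
      (2 ^ ((m : ℝ) / 2) * Real.Gamma ((m : ℝ) / 2))) (Set.Ici 0) := by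
  intro u hu
  have hm' : (3 : ℝ) ≤ m := by exact_mod_cast hm
  rcases (Set.mem_Ici.1 hu).eq_or_lt with h | h
  · subst h
    have : (m : ℝ) / 2 - 1 ≠ 0 := by linarith
    simp [chisqPDF, Real.zero_rpow this]
  · simp [chisqPDF, h]

lemma chisqPDF_continuousOn {m : ℕ} (hm : 3 ≤ m) : ContinuousOn (chisqPDF m) (Set.Ici 0) := by
  have hm' : (3 : ℝ) ≤ m := by exact_mod_cast hm
  refine ContinuousOn.congr ?_ (chisqPDF_eqOn hm)
  refine ContinuousOn.div_const (ContinuousOn.mul ?_ (by fun_prop)) _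
  exact (Real.continuous_rpow_const (by linarith)).continuousOn

lemma chisqPDF_intervalIntegrable {m : ℕ} (hm : 3 ≤ m) {x : ℝ} (hx : 0 ≤ x) :
    IntervalIntegrable (chisqPDF m) volume 0 x := by
  refine ContinuousOn.intervalIntegrable_of_Icc hx ?_
  exact (chisqPDF_continuousOn hm).mono Set.Icc_subset_Ici_self

lemma chisqPDF_pos {m : ℕ} (hm : 0 < m) {x : ℝ} (hx : 0 < x) : 0 < chisqPDF m x := by
  have hm' : (0 : ℝ) < m := by exact_mod_cast hm
  have : 0 < Real.Gamma ((m : ℝ) / 2) := Real.Gamma_pos_of_pos (by positivity)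
  rw [chisqPDF, if_pos hx]
  positivity

lemma chisqPDF_nonneg {m : ℕ} (hm : 0 < m) (x : ℝ) : 0 ≤ chisqPDF m x := by
  by_cases hx : 0 < x
  · exact (chisqPDF_pos hm hx).le
  · simp [chisqPDF, hx]

lemma hasDerivAt_chisqPDF_add_two {m : ℕ} (hm : 0 < m) {x : ℝ} (hx : 0 < x) :
    HasDerivAt (fun u => 2 * chisqPDF (m + 2) u) (chisqPDF m x - chisqPDF (m + 2) x) x := by
  have hm' : (0 : ℝ) < m := by exact_mod_cast hm
  have hG : 0 < Real.Gamma ((m : ℝ) / 2) := Real.Gamma_pos_of_pos (by positivity)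
  have h2 : (0 : ℝ) < 2 ^ ((m : ℝ) / 2) := by positivity
  have hcast : ((m + 2 : ℕ) : ℝ) / 2 = (m : ℝ) / 2 + 1 := by push_cast; ring
  have hΓ : Real.Gamma ((m : ℝ) / 2 + 1) = (m : ℝ) / 2 * Real.Gamma ((m : ℝ) / 2) :=
    Real.Gamma_add_one (by positivity)
  have hpow : (2 : ℝ) ^ ((m : ℝ) / 2 + 1) = 2 ^ ((m : ℝ) / 2) * 2 := by
    rw [Real.rpow_add_one (by norm_num)]
  have hev : (fun u => 2 * chisqPDF (m + 2) u) =ᶠ[nhds x]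
      fun u => 2 * (u ^ ((m : ℝ) / 2) * Real.exp (-u / 2) /
        (2 ^ ((m : ℝ) / 2) * 2 * ((m : ℝ) / 2 * Real.Gamma ((m : ℝ) / 2)))) := by
    filter_upwards [lt_mem_nhds hx] with u hu
    rw [chisqPDF, if_pos hu, hcast, hΓ, hpow, add_sub_cancel_right]
  refine HasDerivAt.congr_of_eventuallyEq ?_ hev
  have d1 : HasDerivAt (fun u : ℝ => u ^ ((m : ℝ) / 2))
      ((m : ℝ) / 2 * x ^ ((m : ℝ) / 2 - 1)) x :=
    Real.hasDerivAt_rpow_const (Or.inl hx.ne')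
  have d2 : HasDerivAt (fun u : ℝ => Real.exp (-u / 2)) (Real.exp (-x / 2) * (-1 / 2)) x :=
    (((hasDerivAt_id x).neg).div_const 2).exp
  refine HasDerivAt.congr_deriv (((d1.mul d2).div_const
    (2 ^ ((m : ℝ) / 2) * 2 * ((m : ℝ) / 2 * Real.Gamma ((m : ℝ) / 2)))).const_mul 2) ?_
  simp only [chisqPDF, if_pos hx, hcast, hΓ, hpow, add_sub_cancel_right]
  field_simp
  ring

/-- `F_m(x) - F_{m+2}(x) = 2 f_{m+2}(x)`, by the fundamental theorem of calculus. -/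
lemma integral_chisqPDF_sub {m : ℕ} (hm : 3 ≤ m) {x : ℝ} (hx : 0 ≤ x) :
    (∫ u in (0 : ℝ)..x, chisqPDF m u) - ∫ u in (0 : ℝ)..x, chisqPDF (m + 2) u =
      2 * chisqPDF (m + 2) x := by
  have i1 := chisqPDF_intervalIntegrable hm hx
  have i2 := chisqPDF_intervalIntegrable (m := m + 2) (by omega) hx
  rw [← intervalIntegral.integral_sub i1 i2,
    intervalIntegral.integral_eq_sub_of_hasDerivAt_of_le (f := fun u => 2 * chisqPDF (m + 2) u) hx
      ?_ (fun u hu => hasDerivAt_chisqPDF_add_two (by omega) hu.1) (i1.sub i2)]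
  · simp [chisqPDF]
  · exact ((chisqPDF_continuousOn (m := m + 2) (by omega)).mono
      Set.Icc_subset_Ici_self).const_mul 2

lemma integral_chisqPDF_add_two_mul_le {m : ℕ} (hm : 3 ≤ m) {x : ℝ} (hx : 0 ≤ x) (j : ℕ) :
    ∫ u in (0 : ℝ)..x, chisqPDF (m + 2 * j) u ≤ ∫ u in (0 : ℝ)..x, chisqPDF m u := by
  induction j with
  | zero => simp
  | succ k ih =>
    have h := integral_chisqPDF_sub (m := m + 2 * k) (by omega) hx
    have h' := chisqPDF_nonneg (m := m + 2 * k + 2) (by omega) x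
    rw [show m + 2 * (k + 1) = m + 2 * k + 2 by ring]
    linarith

/-- The noncentral distribution function is the Poisson mixture of the central ones. -/
lemma hasSum_ncChisqCDF {m : ℕ} (hm : 3 ≤ m) {lam x : ℝ} (hlam : 0 ≤ lam) (hx : 0 ≤ x) :
    HasSum (fun j : ℕ => Real.exp (-lam / 2) * (lam / 2) ^ j / (Nat.factorial j : ℝ) *
      ∫ u in (0 : ℝ)..x, chisqPDF (m + 2 * j) u) (ncChisqCDF m lam x) := by
  have hw : Summable fun j : ℕ => Real.exp (-lam / 2) * (lam / 2) ^ j / (Nat.factorial j : ℝ) := by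
    simpa only [mul_div_assoc] using
      (Real.summable_pow_div_factorial (lam / 2)).mul_left (Real.exp (-lam / 2))
  have hw0 : ∀ j : ℕ, 0 ≤ Real.exp (-lam / 2) * (lam / 2) ^ j / (Nat.factorial j : ℝ) :=
    fun j => by positivity
  have hnorm : ∀ j : ℕ, (∫ u in Set.Ioc 0 x, ‖Real.exp (-lam / 2) * (lam / 2) ^ j /
      (Nat.factorial j : ℝ) * chisqPDF (m + 2 * j) u‖) =
      Real.exp (-lam / 2) * (lam / 2) ^ j / (Nat.factorial j : ℝ) *
        ∫ u in (0 : ℝ)..x, chisqPDF (m + 2 * j) u := by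
    intro j
    rw [intervalIntegral.integral_of_le hx, ← integral_const_mul]
    refine integral_congr_ae (Filter.Eventually.of_forall fun u => ?_)
    exact Real.norm_of_nonneg (mul_nonneg (hw0 j) (chisqPDF_nonneg (by omega) u))
  have key := hasSum_integral_of_summable_integral_norm (μ := volume.restrict (Set.Ioc 0 x))
    (F := fun (j : ℕ) u => Real.exp (-lam / 2) * (lam / 2) ^ j / (Nat.factorial j : ℝ) *
      chisqPDF (m + 2 * j) u)
    (fun j => ((chisqPDF_intervalIntegrable (m := m + 2 * j) (by omega) hx).1).const_mul _) ?_
  · simp only [← intervalIntegral.integral_of_le hx, intervalIntegral.integral_const_mul] at key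
    exact key
  · simp only [hnorm]
    refine Summable.of_nonneg_of_le (fun j => mul_nonneg (hw0 j) ?_)
      (fun j => mul_le_mul_of_nonneg_left (integral_chisqPDF_add_two_mul_le hm hx j) (hw0 j))
      (hw.mul_right _)
    exact intervalIntegral.integral_nonneg hx fun u _ => chisqPDF_nonneg (by omega) u

lemma ncChisqCDF_add_two_lt {m : ℕ} (hm : 3 ≤ m) {lam x : ℝ} (hlam : 0 < lam) (hx : 0 < x) :
    ncChisqCDF (m + 2) lam x < ncChisqCDF m lam x := by
  have hlt : ∀ j : ℕ, Real.exp (-lam / 2) * (lam / 2) ^ j / (Nat.factorial j : ℝ) *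
      (∫ u in (0 : ℝ)..x, chisqPDF (m + 2 + 2 * j) u) <
      Real.exp (-lam / 2) * (lam / 2) ^ j / (Nat.factorial j : ℝ) *
      ∫ u in (0 : ℝ)..x, chisqPDF (m + 2 * j) u := by
    intro j
    have h := integral_chisqPDF_sub (m := m + 2 * j) (by omega) hx.le
    have h' := chisqPDF_pos (m := m + 2 * j + 2) (by omega) hx
    refine mul_lt_mul_of_pos_left ?_ (by positivity)
    rw [show m + 2 + 2 * j = m + 2 * j + 2 by ring]
    linarith
  exact hasSum_lt (fun j => (hlt j).le) (hlt 0)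
    (hasSum_ncChisqCDF (by omega) hlam.le hx.le) (hasSum_ncChisqCDF hm hlam.le hx.le)

/-- **Ordering of local powers when `α₂′ = α₃ > 0`.**
If `α₂ < 0` and `α₂′ = α₃ > 0`, then for every `x > 0` the local powers
satisfy `Π₂ = Π₃ < Π₁ < Π₄` when `ε > 0`, and `Π₂ = Π₃ > Π₁ > Π₄`
when `ε < 0`. -/
theorem precision_local_power_ordering_of_eq (α₂ α₂' α₃ ε φ : ℝ) (hα₂ : α₂ < 0)
    (heq : α₂' = α₃) (hα₃ : 0 < α₃) (hφ : 0 < φ) (p : ℕ) (hp : 1 ≤ p)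
    (x : ℝ) (hx : 0 < x) :
    (0 < ε →
      PiWald α₂ α₂' α₃ ε φ p x = PiScore α₂ α₂' α₃ ε φ p x ∧
      PiScore α₂ α₂' α₃ ε φ p x < PiLR α₂ α₂' α₃ ε φ p x ∧
      PiLR α₂ α₂' α₃ ε φ p x < PiGrad α₂ α₂' α₃ ε φ p x) ∧
    (ε < 0 →
      PiWald α₂ α₂' α₃ ε φ p x = PiScore α₂ α₂' α₃ ε φ p x ∧
      PiGrad α₂ α₂' α₃ ε φ p x < PiLR α₂ α₂' α₃ ε φ p x ∧
      PiLR α₂ α₂' α₃ ε φ p x < PiScore α₂ α₂' α₃ ε φ p x) := by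
  subst heq
  have key : ε ≠ 0 → ∃ D : ℝ, 0 < D ∧
      PiWald α₂ α₂' α₂' ε φ p x = PiScore α₂ α₂' α₂' ε φ p x ∧
      PiLR α₂ α₂' α₂' ε φ p x - PiScore α₂ α₂' α₂' ε φ p x = 2 * (ε * D) ∧
      PiGrad α₂ α₂' α₂' ε φ p x - PiLR α₂ α₂' α₂' ε φ p x = ε * D := by
    intro hε
    have hε2 : 0 < ε ^ 2 := by positivity
    have hlam : 0 < -α₂ * ε ^ 2 := mul_pos (neg_pos.2 hα₂) hε2
    have h35 := ncChisqCDF_add_two_lt (m := 3) le_rfl hlam hx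
    have h57 := ncChisqCDF_add_two_lt (m := 5) (by norm_num) hlam hx
    norm_num only at h35 h57
    -- The power differences are `2 * ε` and `ε` times this positive quantity.
    refine ⟨α₂' / 12 * (3 / (-α₂) * (ncChisqCDF 3 (-α₂ * ε ^ 2) x - ncChisqCDF 5 (-α₂ * ε ^ 2) x) +
      ε ^ 2 * (ncChisqCDF 5 (-α₂ * ε ^ 2) x - ncChisqCDF 7 (-α₂ * ε ^ 2) x)), ?_, ?_, ?_, ?_⟩
    · have := sub_pos.2 h35
      have := sub_pos.2 h57
      have := neg_pos.2 hα₂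
      positivity
    all_goals
      simp only [PiWald, PiScore, PiLR, PiGrad, localPower]
      generalize ncChisqCDF 1 _ x = G1
      generalize ncChisqCDF 3 _ x = G3
      generalize ncChisqCDF 5 _ x = G5
      generalize ncChisqCDF 7 _ x = G7
      have hne := hα₂.ne
      field_simp
      ring
  constructor
  · intro hε
    obtain ⟨D, hD, h1, h2, h3⟩ := key hε.ne'
    have := mul_pos hε hD
    exact ⟨h1, by linarith, by linarith⟩
  · intro hε
    obtain ⟨D, hD, h1, h2, h3⟩ := key hε.ne
    have := mul_neg_of_neg_of_pos hε hD
    exact ⟨h1, by linarith, by linarith⟩
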